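/- Let (G, G⁺, Δ) be a Garside structure and x ∈ G. Let y ∈ R(x), and let α, β ∈ G be such that α⁻¹yα ∈ R(x) and β⁻¹yβ ∈ R(x). Then (α ∧ β)⁻¹ y (α ∧ β) ∈ R(x). -/

import Mathlib

open scoped Pointwise Classical

/-- A Garside structure on a group `G`: a submonoid `pos` of positive elements with
trivial units, prefix and suffix lattice operations, and a Garside element `delta`. -/
structure GarsideStructure (G : Type*) [Group G] where
  /-- the submonoid of positive elements -/
  pos : Submonoid G
  /-- the Garside element Δ -/
  delta : G
  /-- meet for the prefix order -/
  meet : G → G → G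
  /-- join for the prefix order -/
  join : G → G → G
  /-- meet for the suffix order -/
  rmeet : G → G → G
  /-- join for the suffix order -/
  rjoin : G → G → G
  units_triv : ∀ a : G, a ∈ pos → a⁻¹ ∈ pos → a = 1
  meet_le_left : ∀ a b : G, (meet a b)⁻¹ * a ∈ pos
  meet_le_right : ∀ a b : G, (meet a b)⁻¹ * b ∈ pos
  le_meet : ∀ a b c : G, c⁻¹ * a ∈ pos → c⁻¹ * b ∈ pos → c⁻¹ * meet a b ∈ pos
  le_join_left : ∀ a b : G, a⁻¹ * join a b ∈ pos
  le_join_right : ∀ a b : G, b⁻¹ * join a b ∈ pos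
  join_le : ∀ a b c : G, a⁻¹ * c ∈ pos → b⁻¹ * c ∈ pos → (join a b)⁻¹ * c ∈ pos
  rmeet_le_left : ∀ a b : G, a * (rmeet a b)⁻¹ ∈ pos
  rmeet_le_right : ∀ a b : G, b * (rmeet a b)⁻¹ ∈ pos
  le_rmeet : ∀ a b c : G, a * c⁻¹ ∈ pos → b * c⁻¹ ∈ pos → rmeet a b * c⁻¹ ∈ pos
  rjoin_le_left : ∀ a b : G, rjoin a b * a⁻¹ ∈ pos
  rjoin_le_right : ∀ a b : G, rjoin a b * b⁻¹ ∈ pos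
  rjoin_le : ∀ a b c : G, c * a⁻¹ ∈ pos → c * b⁻¹ ∈ pos → c * (rjoin a b)⁻¹ ∈ pos
  delta_pos : delta ∈ pos
  /-- Δ is balanced: its positive prefixes coincide with its positive suffixes -/
  delta_balanced : ∀ s : G, s ∈ pos → (s⁻¹ * delta ∈ pos ↔ delta * s⁻¹ ∈ pos)
  /-- the set of simple elements (divisors of Δ) is finite -/
  divDelta_finite : {s : G | s ∈ pos ∧ s⁻¹ * delta ∈ pos}.Finite
  /-- the simple elements generate `G` -/
  divDelta_generates : Subgroup.closure {s : G | s ∈ pos ∧ s⁻¹ * delta ∈ pos} = ⊤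
  /-- the atoms generate the positive monoid -/
  atoms_generate :
    Submonoid.closure {a : G | a ∈ pos ∧ a ≠ 1 ∧
      ∀ b ∈ pos, b⁻¹ * a ∈ pos → b = 1 ∨ b = a} = pos
  /-- every atom divides Δ -/
  atoms_divide_delta : ∀ a : G, a ∈ pos → a ≠ 1 →
    (∀ b ∈ pos, b⁻¹ * a ∈ pos → b = 1 ∨ b = a) → a⁻¹ * delta ∈ pos
  /-- every element is bounded below and above by powers of Δ -/
  delta_bounds : ∀ x : G, ∃ p q : ℤ, p ≤ q ∧ (delta ^ p)⁻¹ * x ∈ pos ∧ x⁻¹ * delta ^ q ∈ pos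
  /-- conjugation by Δ maps the positive monoid bijectively onto itself -/
  conj_delta : ∀ a : G, a ∈ pos ↔ delta * a * delta⁻¹ ∈ pos
  /-- some positive power of Δ is central -/
  central_power : ∃ n : ℕ, 0 < n ∧ delta ^ n ∈ Subgroup.center G
  /-- no infinite strictly decreasing (for the prefix order) sequence of positive elements -/
  no_infinite_descent : ¬ ∃ f : ℕ → G, (∀ n, f n ∈ pos) ∧
    ∀ n, (f (n + 1))⁻¹ * f n ∈ pos ∧ f (n + 1) ≠ f n

namespace GarsideStructure

variable {G : Type*} [Group G] (S : GarsideStructure G)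

/-- the prefix order: `a ≼ b` iff `a⁻¹ * b` is positive -/
def le (a b : G) : Prop := a⁻¹ * b ∈ S.pos

/-- the set of positive prefixes of an element -/
def Div (d : G) : Set G := {s : G | s ∈ S.pos ∧ S.le s d}

/-- atoms: nontrivial positive elements with no nontrivial proper positive prefix -/
def IsAtomic (a : G) : Prop :=
  a ∈ S.pos ∧ a ≠ 1 ∧ ∀ b ∈ S.pos, S.le b a → b = 1 ∨ b = a

/-- the set of atoms -/
def atoms : Set G := {a : G | S.IsAtomic a}

/-- the left denominator of `x`: `D_L x = (1 ∧ x)⁻¹` -/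
def DL (x : G) : G := (S.meet 1 x)⁻¹

/-- the left numerator of `x`: `N_L x = D_L x * x` -/
def NL (x : G) : G := S.DL x * x

/-- the (left) swap `φ(x) = N_L x * (D_L x)⁻¹ = D_L x * x * (D_L x)⁻¹` -/
def swap (x : G) : G := S.DL x * x * (S.DL x)⁻¹

/-- an element is recurrent if it is fixed by some positive iterate of the swap map -/
def Recurrent (x : G) : Prop := ∃ m : ℕ, 0 < m ∧ S.swap^[m] x = x

/-- the set `R(x)` of recurrent conjugates of `x` -/
def Rset (x : G) : Set G := {y : G | IsConj x y ∧ S.Recurrent y}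

/-- the set `C⁺(x)` of positive conjugates of `x` -/
def Cpos (x : G) : Set G := {y : G | IsConj x y ∧ y ∈ S.pos}

/-- the set `C⁻(x)` of negative conjugates of `x` -/
def Cneg (x : G) : Set G := {y : G | IsConj x y ∧ y⁻¹ ∈ S.pos}

/-- the transport of `u` at `y`: with `y = a⁻¹ b` reduced, `u^{(1)} = (a u) ∧ (b u)` -/
def transport (y u : G) : G := S.meet (S.DL y * u) (S.NL y * u)

/-- `Δ_X`: the least upper bound for the prefix order of a set `X` (`1` if there is none) -/
noncomputable def deltaOf (X : Set G) : G :=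
  if h : ∃ d : G, (∀ x ∈ X, S.le x d) ∧ ∀ c : G, (∀ x ∈ X, S.le x c) → S.le d c
  then h.choose else 1

/-- the closure `X̄ = Div(Δ_X) ∩ 𝒜` of a set of atoms -/
noncomputable def closureOf (X : Set G) : Set G := S.Div (S.deltaOf X) ∩ S.atoms

/-- the subgroup `G_X` generated by the closure of `X` -/
noncomputable def GX (X : Set G) : Subgroup G := Subgroup.closure (S.closureOf X)

/-- the support of an element: the closure of the set of atoms appearing in atom
factorizations of its left denominator and left numerator -/
noncomputable def supp (x : G) : Set G :=
  if h : ∃ p : List G × List G,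
      (∀ a ∈ p.1, a ∈ S.atoms) ∧ (∀ a ∈ p.2, a ∈ S.atoms) ∧
      p.1.prod = S.DL x ∧ p.2.prod = S.NL x
  then S.closureOf ({a : G | a ∈ h.choose.1} ∪ {a : G | a ∈ h.choose.2})
  else ∅

/-- an LCM-Garside structure -/
structure IsLCM : Prop where
  delta_eq : S.delta = S.deltaOf S.atoms
  balanced : ∀ X ⊆ S.atoms, ∀ s ∈ S.pos,
    (S.le s (S.deltaOf X) ↔ S.deltaOf X * s⁻¹ ∈ S.pos)
  div_eq : ∀ X ⊆ S.atoms,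
    S.Div (S.deltaOf X) = S.Div S.delta ∩ {g : G | g ∈ S.GX X ∧ g ∈ S.pos}
  factor_closed : ∀ X ⊆ S.atoms, ∀ g : G, g ∈ S.GX X → g ∈ S.pos →
    ∀ a b : G, a ∈ S.pos → b ∈ S.pos → g = a * b → a ∈ S.GX X ∧ b ∈ S.GX X
  lattice_closed : ∀ X ⊆ S.atoms, ∀ a b : G, a ∈ S.GX X → b ∈ S.GX X →
    S.meet a b ∈ S.GX X ∧ S.join a b ∈ S.GX X
  fraction_closed : ∀ X ⊆ S.atoms, ∀ g : G, g ∈ S.GX X →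
    S.DL g ∈ S.GX X ∧ S.NL g ∈ S.GX X

/-- a standard parabolic subgroup: the subgroup generated by a saturated set of atoms -/
noncomputable def IsStandardParabolic (H : Subgroup G) : Prop :=
  ∃ X : Set G, X ⊆ S.atoms ∧ S.closureOf X = X ∧ H = S.GX X

/-- a parabolic subgroup: a conjugate of a standard parabolic subgroup -/
noncomputable def IsParabolic (H : Subgroup G) : Prop :=
  ∃ (P : Subgroup G) (c : G), S.IsStandardParabolic P ∧
    H = Subgroup.map (MulAut.conj c).toMonoidHom P

/-- the structure is support-preserving if conjugations between positive elements
conjugate the corresponding parabolic subgroups of the supports -/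
noncomputable def SupportPreserving : Prop :=
  ∀ y ∈ S.pos, ∀ z ∈ S.pos, ∀ α : G, α⁻¹ * y * α = z →
    Subgroup.map (MulAut.conj α⁻¹).toMonoidHom (S.GX (S.supp y)) = S.GX (S.supp z)

/-- `P` is the parabolic closure of `x` -/
noncomputable def IsParabolicClosure (x : G) (P : Subgroup G) : Prop :=
  S.IsParabolic P ∧ x ∈ P ∧ ∀ H : Subgroup G, S.IsParabolic H → x ∈ H → P ≤ H

end GarsideStructure

namespace GarsideStructure

variable {G : Type*} [Group G] (S : GarsideStructure G)

section PrefixOrder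

variable {S}

theorem le_refl (a : G) : S.le a a := by
  simp [le, S.pos.one_mem]

theorem le.trans {a b c : G} (hab : S.le a b) (hbc : S.le b c) : S.le a c := by
  simpa [le, mul_assoc] using S.pos.mul_mem hab hbc

theorem le.antisymm {a b : G} (hab : S.le a b) (hba : S.le b a) : a = b :=
  inv_mul_eq_one.1 (S.units_triv _ hab (by simpa [le] using hba))

theorem mul_le_mul_left_iff (g : G) {a b : G} : S.le (g * a) (g * b) ↔ S.le a b := by
  simp [le, mul_assoc]

end PrefixOrder

/-- The prefix order as a meet-semilattice. -/
abbrev prefixSemilattice : SemilatticeInf G where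
  le := S.le
  le_refl := le_refl
  le_trans _ _ _ := le.trans
  le_antisymm _ _ := le.antisymm
  inf := S.meet
  inf_le_left := S.meet_le_left
  inf_le_right := S.meet_le_right
  le_inf a b c := S.le_meet b c a

theorem mul_meet (g a b : G) : g * S.meet a b = S.meet (g * a) (g * b) := by
  apply le.antisymm (S := S)
  · exact S.le_meet _ _ _ ((mul_le_mul_left_iff g).2 (S.meet_le_left a b))
      ((mul_le_mul_left_iff g).2 (S.meet_le_right a b))
  · rw [← mul_le_mul_left_iff g⁻¹, inv_mul_cancel_left]
    apply S.le_meet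
    · simpa [mul_assoc] using S.meet_le_left (g * a) (g * b)
    · simpa [mul_assoc] using S.meet_le_right (g * a) (g * b)

theorem meet_meet_meet_comm (a b c d : G) :
    S.meet (S.meet a b) (S.meet c d) = S.meet (S.meet a c) (S.meet b d) :=
  @inf_inf_inf_comm G S.prefixSemilattice a b c d

theorem conj_delta_zpow (n : ℤ) (a : G) :
    S.delta ^ n * a * S.delta ^ (-n) ∈ S.pos ↔ a ∈ S.pos := by
  induction n generalizing a with
  | zero => simp
  | succ n ih =>
    rw [← ih a, S.conj_delta (S.delta ^ (n : ℤ) * a * S.delta ^ (-(n : ℤ)))]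
    rw [zpow_neg, zpow_neg, add_comm, zpow_add, zpow_one, mul_inv_rev]
    simp only [mul_assoc]
  | pred n ih =>
    rw [← ih a, S.conj_delta (S.delta ^ (-(n : ℤ) - 1) * a * S.delta ^ (-(-(n : ℤ) - 1)))]
    have h : S.delta ^ (-(n : ℤ)) = S.delta * S.delta ^ (-(n : ℤ) - 1) := by
      rw [← zpow_one_add]; congr 1; ring
    rw [zpow_neg _ (-(n : ℤ) - 1), zpow_neg _ (-(n : ℤ)), h, mul_inv_rev]
    simp only [mul_assoc]

theorem mul_delta_zpow_le_mul_delta_zpow_iff (n : ℤ) {a b : G} :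
    S.le (a * S.delta ^ n) (b * S.delta ^ n) ↔ S.le a b := by
  have h := S.conj_delta_zpow (-n) (a⁻¹ * b)
  simpa [le, mul_assoc] using h

theorem le_mul_delta_zpow_iff (n : ℤ) {a b : G} :
    S.le a (b * S.delta ^ n) ↔ S.le (a * S.delta ^ (-n)) b := by
  rw [← S.mul_delta_zpow_le_mul_delta_zpow_iff n (a := a * _)]
  simp

theorem delta_zpow_le_mul {n : ℤ} {a u : G} (ha : a ∈ S.pos)
    (hu : S.le (S.delta ^ n) u) : S.le (S.delta ^ n) (a * u) := by
  have h := S.pos.mul_mem ((S.conj_delta_zpow (-n) a).2 ha) hu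
  simpa [le, mul_assoc] using h

theorem finite_setOf_pos_le_delta_pow (n : ℕ) :
    {u : G | u ∈ S.pos ∧ S.le u (S.delta ^ n)}.Finite := by
  induction n with
  | zero =>
    refine (Set.finite_singleton (1 : G)).subset ?_
    rintro u ⟨hu, hu'⟩
    exact S.units_triv u hu (by simpa [le] using hu')
  | succ n ih =>
    refine (S.divDelta_finite.mul ih).subset ?_
    rintro u ⟨hu, hu'⟩
    refine ⟨S.meet u S.delta, ⟨?_, S.meet_le_right _ _⟩, (S.meet u S.delta)⁻¹ * u,
      ⟨S.meet_le_left _ _, ?_⟩, by simp⟩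
    · simpa using S.le_meet u S.delta 1 (by simpa using hu) (by simpa using S.delta_pos)
    · rw [← mul_le_mul_left_iff (S.meet u S.delta), mul_inv_cancel_left, ← zpow_natCast,
        le_mul_delta_zpow_iff]
      apply S.le_meet
      · change S.le _ _
        rw [← le_mul_delta_zpow_iff, zpow_natCast]
        simpa [le] using S.pos.pow_mem S.delta_pos n
      · change S.le _ _
        rwa [← le_mul_delta_zpow_iff, zpow_natCast, ← pow_succ']

theorem finite_setOf_delta_zpow_le_le (p q : ℤ) (hpq : p ≤ q) :
    {u : G | S.le (S.delta ^ p) u ∧ S.le u (S.delta ^ q)}.Finite := by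
  obtain ⟨n, rfl⟩ := Int.le.dest hpq
  refine ((S.finite_setOf_pos_le_delta_pow n).image (S.delta ^ p * ·)).subset ?_
  rintro u ⟨hpu, huq⟩
  refine ⟨(S.delta ^ p)⁻¹ * u, ⟨hpu, ?_⟩, by simp⟩
  rw [← mul_le_mul_left_iff (S.delta ^ p), mul_inv_cancel_left]
  simpa [zpow_add] using huq

theorem DL_mem_pos (y : G) : S.DL y ∈ S.pos := by
  simpa [DL] using S.meet_le_left 1 y

theorem NL_mem_pos (y : G) : S.NL y ∈ S.pos := S.meet_le_right 1 y

theorem meet_DL_NL (y : G) : S.meet (S.DL y) (S.NL y) = 1 := by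
  have h := S.mul_meet (S.DL y) 1 y
  rw [mul_one] at h
  rw [NL, ← h, DL, inv_mul_cancel]

theorem transport_eq (y u : G) :
    S.transport y u = S.DL y * u * (S.DL (u⁻¹ * y * u))⁻¹ := by
  rw [DL.eq_1 S (u⁻¹ * y * u), inv_inv, mul_meet, transport, NL]
  congr 1 <;> group

theorem conj_transport (y u : G) :
    (S.transport y u)⁻¹ * S.swap y * S.transport y u = S.swap (u⁻¹ * y * u) := by
  rw [transport_eq, swap, swap]
  group

theorem transport_meet (y u v : G) :
    S.transport y (S.meet u v) = S.meet (S.transport y u) (S.transport y v) := by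
  simp only [transport, mul_meet]
  exact S.meet_meet_meet_comm _ _ _ _

theorem delta_zpow_le_transport {n : ℤ} (y : G) {u : G} (hu : S.le (S.delta ^ n) u) :
    S.le (S.delta ^ n) (S.transport y u) :=
  S.le_meet _ _ _ (S.delta_zpow_le_mul (S.DL_mem_pos y) hu)
    (S.delta_zpow_le_mul (S.NL_mem_pos y) hu)

theorem transport_le_delta_zpow {n : ℤ} (y : G) {u : G} (hu : S.le u (S.delta ^ n)) :
    S.le (S.transport y u) (S.delta ^ n) := by
  rw [← one_mul (S.delta ^ n), le_mul_delta_zpow_iff, ← S.meet_DL_NL y]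
  refine S.le_meet _ _ _ ?_ ?_ <;> refine (S.le_mul_delta_zpow_iff n).1 ?_
  · exact le.trans (S.meet_le_left _ _) ((mul_le_mul_left_iff _).2 hu)
  · exact le.trans (S.meet_le_right _ _) ((mul_le_mul_left_iff _).2 hu)

/-- The `n`-fold transport of `u` along the orbit of `y` under swaps. -/
def iterTransport : ℕ → G → G → G
  | 0, _, u => u
  | n + 1, y, u => iterTransport n (S.swap y) (S.transport y u)

theorem conj_iterTransport (n : ℕ) (y u : G) :
    (S.iterTransport n y u)⁻¹ * S.swap^[n] y * S.iterTransport n y u =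
      S.swap^[n] (u⁻¹ * y * u) := by
  induction n generalizing y u with
  | zero => rfl
  | succ n ih =>
    rw [iterTransport, Function.iterate_succ_apply, ih, conj_transport,
      Function.iterate_succ_apply]

theorem iterTransport_meet (n : ℕ) (y u v : G) :
    S.iterTransport n y (S.meet u v) =
      S.meet (S.iterTransport n y u) (S.iterTransport n y v) := by
  induction n generalizing y u v with
  | zero => rfl
  | succ n ih => simp only [iterTransport, transport_meet, ih]

theorem delta_zpow_le_iterTransport {p : ℤ} (n : ℕ) (y : G) {u : G}
    (hu : S.le (S.delta ^ p) u) : S.le (S.delta ^ p) (S.iterTransport n y u) := by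
  induction n generalizing y u with
  | zero => exact hu
  | succ n ih => exact ih _ (S.delta_zpow_le_transport y hu)

theorem iterTransport_le_delta_zpow {q : ℤ} (n : ℕ) (y : G) {u : G}
    (hu : S.le u (S.delta ^ q)) : S.le (S.iterTransport n y u) (S.delta ^ q) := by
  induction n generalizing y u with
  | zero => exact hu
  | succ n ih => exact ih _ (S.transport_le_delta_zpow y hu)

theorem iterTransport_injOn (n : ℕ) (y z : G) :
    Set.InjOn (S.iterTransport n y) {u | u⁻¹ * y * u = z} := by
  induction n generalizing y z with
  | zero => exact Set.injOn_id _
  | succ n ih =>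
    intro u hu v hv huv
    have h : S.transport y u = S.transport y v := by
      refine ih (S.swap y) (S.swap z) ?_ ?_ huv
      · exact (S.conj_transport y u).trans (congrArg _ hu)
      · exact (S.conj_transport y v).trans (congrArg _ hv)
    rw [transport_eq, transport_eq, Set.mem_ofPred.1 hu, Set.mem_ofPred.1 hv] at h
    simpa using h

open Function

/-- A conjugator between two elements fixed by `n` swaps is periodic under `n`-fold transport. -/
theorem mem_periodicPts_iterTransport {n : ℕ} {y α : G} (hy : IsPeriodicPt S.swap n y)
    (hα : IsPeriodicPt S.swap n (α⁻¹ * y * α)) : α ∈ periodicPts (S.iterTransport n y) := by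
  obtain ⟨p, q, hpq, hp, hq⟩ := S.delta_bounds α
  let F : Set G := {u | S.le (S.delta ^ p) u ∧ S.le u (S.delta ^ q)} ∩
    {u | u⁻¹ * y * u = α⁻¹ * y * α}
  have hF : F.Finite := (S.finite_setOf_delta_zpow_le_le p q hpq).inter_of_left _
  have hmaps : Set.MapsTo (S.iterTransport n y) F F := by
    rintro u ⟨⟨hpu, huq⟩, hu⟩
    refine ⟨⟨S.delta_zpow_le_iterTransport n y hpu, S.iterTransport_le_delta_zpow n y huq⟩, ?_⟩
    have h := S.conj_iterTransport n y u
    rwa [hy.eq, Set.mem_ofPred.1 hu, hα.eq] at h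
  have : Finite F := hF
  have hinj : Set.InjOn (S.iterTransport n y) F :=
    (S.iterTransport_injOn n y _).mono Set.inter_subset_right
  obtain ⟨k, hk, hper⟩ :=
    (hmaps.restrict_inj.2 hinj).mem_periodicPts (⟨α, ⟨hp, hq⟩, rfl⟩ : F)
  refine ⟨k, hk, ?_⟩
  have h := congrArg Subtype.val hper.eq
  rwa [hmaps.iterate_restrict] at h

theorem iterate_iterTransport_meet (n k : ℕ) (y u v : G) :
    (S.iterTransport n y)^[k] (S.meet u v) =
      S.meet ((S.iterTransport n y)^[k] u) ((S.iterTransport n y)^[k] v) := by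
  induction k generalizing u v with
  | zero => rfl
  | succ k ih => simp only [iterate_succ_apply, iterTransport_meet, ih]

theorem recurrent_conj_of_mem_periodicPts {n : ℕ} (hn : 0 < n) {y u : G}
    (hy : IsPeriodicPt S.swap n y) (hu : u ∈ periodicPts (S.iterTransport n y)) :
    S.Recurrent (u⁻¹ * y * u) := by
  obtain ⟨k, hk, hper⟩ := hu
  have hsemi : Semiconj (fun v => v⁻¹ * y * v) (S.iterTransport n y) S.swap^[n] := fun v => by
    have h := S.conj_iterTransport n y v
    rwa [hy.eq] at h
  refine ⟨n * k, Nat.mul_pos hn hk, ?_⟩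
  rw [iterate_mul]
  exact IsPeriodicPt.map (g := fun v => v⁻¹ * y * v) hper hsemi

theorem meet_mem_periodicPts_iterTransport {n : ℕ} {y α β : G}
    (hα : α ∈ periodicPts (S.iterTransport n y)) (hβ : β ∈ periodicPts (S.iterTransport n y)) :
    S.meet α β ∈ periodicPts (S.iterTransport n y) := by
  obtain ⟨k, hk, hkα⟩ := hα
  obtain ⟨l, hl, hlβ⟩ := hβ
  refine ⟨k * l, Nat.mul_pos hk hl, ?_⟩
  rw [IsPeriodicPt, IsFixedPt, iterate_iterTransport_meet, (hkα.mul_const l).eq,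
    (hlβ.const_mul k).eq]

end GarsideStructure

/-- convexity. If `y ∈ R(x)` and the conjugates of `y` by `α` and `β`
lie in `R(x)`, then so does the conjugate of `y` by `α ∧ β`. -/
theorem garside_convexity {G : Type*} [Group G]
    (S : GarsideStructure G) (x y α β : G)
    (hy : y ∈ S.Rset x)
    (hα : α⁻¹ * y * α ∈ S.Rset x) (hβ : β⁻¹ * y * β ∈ S.Rset x) :
    (S.meet α β)⁻¹ * y * S.meet α β ∈ S.Rset x := by
  obtain ⟨hxy, m, hm, hmy⟩ := hy
  obtain ⟨-, k, hk, hkα⟩ := hα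
  obtain ⟨-, l, hl, hlβ⟩ := hβ
  refine ⟨hxy.trans (isConj_iff.2 ⟨(S.meet α β)⁻¹, by simp⟩), ?_⟩
  have hy' : Function.IsPeriodicPt S.swap (m * k * l) y :=
    (Function.IsPeriodicPt.mul_const hmy k).mul_const l
  have hα' : Function.IsPeriodicPt S.swap (m * k * l) (α⁻¹ * y * α) :=
    (Function.IsPeriodicPt.const_mul hkα m).mul_const l
  have hβ' : Function.IsPeriodicPt S.swap (m * k * l) (β⁻¹ * y * β) :=
    Function.IsPeriodicPt.const_mul hlβ (m * k)
  exact S.recurrent_conj_of_mem_periodicPts (by positivity) hy'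
    (S.meet_mem_periodicPts_iterTransport (S.mem_periodicPts_iterTransport hy' hα')
      (S.mem_periodicPts_iterTransport hy' hβ'))
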